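/- arXiv:1105.3818 — 3 statements merged into one kernel-verified Lean document; each statement's English description precedes it below -/
import Mathlib

section
/- For every i ≥ 0, p_i = p_{i+1}; that is, the torsion-free rank of the finitely generated abelian group A_i = Φ(Γ_i) ≅ Γ_i/K_i is the same for all i ≥ 0. -/
/-- The subgroup `2^{-i} ℤ^d` of `ℝ^d`. -/
def binGrid (d i : ℕ) : AddSubgroup (Fin d → ℝ) where
  carrier := {u | ∀ j, ∃ z : ℤ, u j = (z : ℝ) / 2 ^ i}
  zero_mem' := fun j => ⟨0, by simp⟩
  add_mem' := by
    rintro a b ha hb j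
    obtain ⟨za, hza⟩ := ha j
    obtain ⟨zb, hzb⟩ := hb j
    exact ⟨za + zb, by simp [hza, hzb]; ring⟩
  neg_mem' := by
    rintro a ha j
    obtain ⟨z, hz⟩ := ha j
    exact ⟨-z, by simp [hz]; ring⟩

/-!
The quotients `Γ_i / K_i` form an increasing chain, because `K_i` is cut out of `Γ_i` by the same
condition `Φ u = 1` for every `i`. Multiplication by `2` maps `Γ_{i+1}` into `Γ_i`, so each quotient
of consecutive terms of the chain is a torsion group, and torsion does not contribute to the rank.
-/

universe u v w

section Rank

variable {R : Type u} [CommRing R] [IsDomain R] {M : Type v} [AddCommGroup M] [Module R M]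

theorem rank_eq_of_isTorsion_quotient {L : Submodule R M} (hL : Module.IsTorsion R (M ⧸ L)) :
    Module.rank R L = Module.rank R M := by
  rw [← rank_quotient_add_rank_of_isDomain L, hL.rank_eq_zero, zero_add]

theorem lift_rank_eq_of_injective_of_isTorsion_quotient_range {N : Type w} [AddCommGroup N]
    [Module R N] {f : M →ₗ[R] N} (hf : Function.Injective f)
    (htors : Module.IsTorsion R (N ⧸ f.range)) :
    Cardinal.lift.{w} (Module.rank R M) = Cardinal.lift.{v} (Module.rank R N) := by
  rw [← lift_rank_range_of_injective f hf, rank_eq_of_isTorsion_quotient htors]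

theorem isTorsion_quotient_of_smul_mem {L : Submodule R M} {r : R} (hr : r ≠ 0)
    (hL : ∀ x, r • x ∈ L) : Module.IsTorsion R (M ⧸ L) := by
  intro x
  obtain ⟨y, rfl⟩ := L.mkQ_surjective x
  exact ⟨⟨r, mem_nonZeroDivisors_of_ne_zero hr⟩, (Submodule.Quotient.mk_eq_zero L).2 (hL y)⟩

end Rank

theorem quotientAddGroup_map_injective_of_comap_eq {A : Type u} {B : Type v} [AddGroup A]
    [AddGroup B] {f : A →+ B} {H : AddSubgroup A} {H' : AddSubgroup B} [H.Normal] [H'.Normal]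
    (hH : H'.comap f = H) : Function.Injective (QuotientAddGroup.map H H' f hH.ge) := by
  refine (QuotientAddGroup.injective_lift_iff _ _ _).2 ?_
  rw [← AddMonoidHom.comap_ker, QuotientAddGroup.ker_mk', hH]

theorem lift_rank_quotient_eq_of_zsmul_mem_range {A : Type u} {B : Type v} [AddCommGroup A]
    [AddCommGroup B] {f : A →+ B} {H : AddSubgroup A} {H' : AddSubgroup B} (hH : H'.comap f = H)
    {n : ℤ} (hn : n ≠ 0) (hf : ∀ b, n • b ∈ f.range) :
    Cardinal.lift.{v} (Module.rank ℤ (A ⧸ H)) = Cardinal.lift.{u} (Module.rank ℤ (B ⧸ H')) := by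
  let g := (QuotientAddGroup.map H H' f hH.ge).toIntLinearMap
  have hg : ∀ y, n • y ∈ g.range := by
    intro y
    obtain ⟨b, rfl⟩ := QuotientAddGroup.mk_surjective y
    obtain ⟨a, ha⟩ := hf b
    exact ⟨a, congrArg QuotientAddGroup.mk ha⟩
  exact lift_rank_eq_of_injective_of_isTorsion_quotient_range (f := g)
    (quotientAddGroup_map_injective_of_comap_eq hH) (isTorsion_quotient_of_smul_mem hn hg)

theorem binGrid_mono (d : ℕ) : Monotone (binGrid d) := by
  intro i j hij u hu k
  obtain ⟨l, rfl⟩ := Nat.exists_eq_add_of_le hij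
  obtain ⟨z, hz⟩ := hu k
  refine ⟨2 ^ l * z, ?_⟩
  rw [hz, pow_add]
  push_cast
  field_simp

theorem two_pow_zsmul_mem_binGrid {d i l : ℕ} {u : Fin d → ℝ} (hu : u ∈ binGrid d (i + l)) :
    (2 ^ l : ℤ) • u ∈ binGrid d i := by
  intro k
  obtain ⟨z, hz⟩ := hu k
  refine ⟨z, ?_⟩
  rw [Pi.smul_apply, zsmul_eq_mul, hz, pow_add]
  push_cast
  field_simp

theorem rank_quotient_binGrid_succ_general {d i j : ℕ} (hij : i ≤ j)
    {H : AddSubgroup (binGrid d i)} {H' : AddSubgroup (binGrid d j)}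
    (hH : H'.comap (AddSubgroup.inclusion (binGrid_mono d hij)) = H) :
    Module.rank ℤ (binGrid d i ⧸ H) = Module.rank ℤ (binGrid d j ⧸ H') := by
  obtain ⟨l, rfl⟩ := Nat.exists_eq_add_of_le hij
  have two_pow_smul_mem (u : binGrid d (i + l)) :
      (2 ^ l : ℤ) • u ∈ (AddSubgroup.inclusion (binGrid_mono d hij)).range :=
    ⟨⟨_, two_pow_zsmul_mem_binGrid u.2⟩, rfl⟩
  exact Cardinal.lift_inj.1
    (lift_rank_quotient_eq_of_zsmul_mem_range hH (pow_ne_zero l two_ne_zero) two_pow_smul_mem)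

/-- the torsion-free rank `p i` of `A_i ≅ Γ_i / K_i` is the same for all `i`. -/
theorem rank_quotient_binGrid_succ
    (d : ℕ) (hd : 1 ≤ d) (G : Type*) [Group G]
    (Φ : (Fin d → ℝ) → G) (hΦ : ∀ u v, Φ (u + v) = Φ u * Φ v)
    (K : (i : ℕ) → AddSubgroup (binGrid d i))
    (hK : ∀ (i : ℕ) (u : binGrid d i), u ∈ K i ↔ Φ (u : Fin d → ℝ) = 1)
    (p : ℕ → Cardinal)
    (hp : ∀ i, p i = Module.rank ℤ ((binGrid d i) ⧸ K i)) :
    ∀ i : ℕ, p i = p (i + 1) := by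
  intro i
  rw [hp, hp]
  exact rank_quotient_binGrid_succ_general i.le_succ
    (AddSubgroup.ext fun _ => (hK (i + 1) _).trans (hK i _).symm)
end

section
/- Let {φ_g}_{g∈Γ} be a nonsingular action of an abelian group Γ on a σ-finite measure space (S, 𝒮, μ), and let K := {g ∈ Γ : φ_g = id_S}. Suppose H is a finitely generated torsion-free subgroup of Γ with H ∩ K = {0} whose action {φ_h}_{h∈H} is conservative, r ≥ 1 is an integer, and H' is a subgroup of Γ such that r·H ⊆ H' + K (for every h ∈ H there exist h' ∈ H' and w ∈ K with r·h = h' + w). Then the action {φ_h}_{h∈H'} is conservative. -/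
open MeasureTheory

/-!
Suppose `W` is wandering for `H'`. Since `r • H ⊆ H' + K` and `H ∩ K = 0`, the set `W` is also
wandering for `r • H`, which has finite index in `H`. Hence every point `x` lies in only finitely
many of the translates `h + W` with `h ∈ H`, at most one for each coset of `r • H`. For a fixed
finite nonempty `F ⊆ H`, consider the points `x` with `{h ∈ H | x ∈ h + W} = F`. Translating `x` by
`h` translates this set of indices by `h`, and a nonzero element of a torsion-free group cannot
stabilize a finite nonempty subset, so these points form a wandering set for `H`, which is
therefore null. As there are only countably many `F`, the set `W` itself is null.
-/

open scoped Pointwise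

section Wandering

variable {G G' S : Type*}

/-- A set is wandering for an action of `G` if its translates by distinct elements of `G` are
disjoint. -/
def IsWandering (G : Type*) [VAdd G S] (W : Set S) : Prop :=
  Pairwise (Function.onFun Disjoint fun g : G ↦ g +ᵥ W)

/-- An action of `G` is conservative with respect to `μ` if its measurable wandering sets are
`μ`-null. No compatibility between the action and `μ` is built in. -/
def IsConservative (G : Type*) [VAdd G S] [MeasurableSpace S] (μ : Measure S) : Prop :=
  ∀ ⦃W : Set S⦄, MeasurableSet W → IsWandering G W → μ W = 0

variable [AddGroup G] [AddAction G S] [AddGroup G'] [AddAction G' S] {W : Set S}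

theorem isWandering_iff_forall_mem :
    IsWandering G W ↔ ∀ g : G, ∀ x ∈ W, g +ᵥ x ∈ W → g = 0 := by
  refine Set.pairwise_disjoint_vadd_iff.trans (forall_congr' fun g ↦ ⟨fun h x hx hgx ↦ ?_, ?_⟩)
  · exact h ⟨g +ᵥ x, Set.vadd_mem_vadd_set hx, hgx⟩
  · rintro h ⟨_, ⟨x, hx, rfl⟩, hgx⟩
    exact h x hx hgx

theorem isWandering_addSubgroup_iff {H : AddSubgroup G} :
    IsWandering H W ↔ ∀ g ∈ H, ∀ h ∈ H, g ≠ h → Disjoint (g +ᵥ W) (h +ᵥ W) :=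
  ⟨fun hW g hg h hh hne ↦ @hW ⟨g, hg⟩ ⟨h, hh⟩ (Subtype.coe_ne_coe.1 hne),
    fun hW g h hne ↦ hW g g.2 h h.2 (Subtype.coe_ne_coe.2 hne)⟩

theorem IsWandering.of_forall_exists_vadd_eq (hW : IsWandering G W)
    (hG' : ∀ g' : G', g' ≠ 0 → ∃ g : G, g ≠ 0 ∧ ∀ x : S, g' +ᵥ x = g +ᵥ x) :
    IsWandering G' W := by
  rw [isWandering_iff_forall_mem] at hW ⊢
  intro g' x hx hg'x
  by_contra hg'
  obtain ⟨g, hg, hgg'⟩ := hG' g' hg'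
  exact hg (hW g x hx (hgg' x ▸ hg'x))

variable [MeasurableSpace S] {μ : Measure S}

theorem isConservative_addSubgroup_iff {H : AddSubgroup G} :
    IsConservative H μ ↔ ¬ ∃ W : Set S, MeasurableSet W ∧ 0 < μ W ∧
      ∀ g ∈ H, ∀ h ∈ H, g ≠ h → Disjoint (g +ᵥ W) (h +ᵥ W) := by
  simp only [IsConservative, isWandering_addSubgroup_iff, pos_iff_ne_zero]
  grind

theorem IsConservative.of_forall_exists_vadd_eq (hG' : IsConservative G' μ)
    (hGG' : ∀ g' : G', g' ≠ 0 → ∃ g : G, g ≠ 0 ∧ ∀ x : S, g' +ᵥ x = g +ᵥ x) :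
    IsConservative G μ :=
  fun _ hWm hW ↦ hG' hWm (hW.of_forall_exists_vadd_eq hGG')

end Wandering

section HittingSet

variable {G S : Type*} [AddGroup G] [AddAction G S] {W : Set S}

/-- The elements of `G` whose translates of `W` contain `x`. These are the negatives of the times
at which the orbit of `x` visits `W`; this sign makes `x ↦ hittingSet G W x` equivariant for left
translation. -/
def hittingSet (G : Type*) [VAdd G S] (W : Set S) (x : S) : Set G :=
  {g | x ∈ g +ᵥ W}

theorem mem_hittingSet {g : G} {x : S} : g ∈ hittingSet G W x ↔ x ∈ g +ᵥ W :=
  Iff.rfl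

theorem hittingSet_vadd (g : G) (x : S) : hittingSet G W (g +ᵥ x) = g +ᵥ hittingSet G W x := by
  ext h
  simp only [mem_hittingSet, Set.mem_vadd_set_iff_neg_vadd_mem, vadd_eq_add, neg_neg, add_vadd]

theorem zero_mem_hittingSet {x : S} : 0 ∈ hittingSet G W x ↔ x ∈ W := by
  rw [mem_hittingSet, zero_vadd]

theorem measurableSet_setOf_hittingSet_eq [Countable G] [MeasurableSpace S]
    [MeasurableConstVAdd G S] (hW : MeasurableSet W) (F : Set G) :
    MeasurableSet {x | hittingSet G W x = F} := by
  simp only [Set.ext_iff, mem_hittingSet]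
  exact measurableSet_setOfPred.2 <| .forall fun g ↦ (hW.const_vadd g).mem.iff measurable_const

theorem isOfFinAddOrder_of_vadd_eq_self {F : Set G} (hF : F.Finite) (hF₀ : F.Nonempty) {g : G}
    (hg : g +ᵥ F = F) : IsOfFinAddOrder g := by
  have hmultiples : (AddSubmonoid.multiples g : Set G) ⊆ AddAction.stabilizer G F :=
    AddSubmonoid.multiples_le.2 hg
  exact finite_multiples.1 ((AddAction.stabilizer_finite hF₀ hF).subset hmultiples)

theorem isWandering_setOf_hittingSet_eq [IsAddTorsionFree G] {F : Set G} (hF : F.Finite)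
    (hF₀ : F.Nonempty) : IsWandering G {x | hittingSet G W x = F} := by
  refine isWandering_iff_forall_mem.2 fun g x (hx : _ = F) (hgx : _ = F) ↦ ?_
  have hgF : g +ᵥ F = F := by rwa [hittingSet_vadd, hx] at hgx
  exact (isOfFinAddOrder_iff_eq_zero g).1 (isOfFinAddOrder_of_vadd_eq_self hF hF₀ hgF)

theorem IsConservative.measure_eq_zero_of_finite_hittingSet [Countable G] [IsAddTorsionFree G]
    [MeasurableSpace S] [MeasurableConstVAdd G S] {μ : Measure S} (hG : IsConservative G μ)
    (hW : MeasurableSet W) (hfin : ∀ x ∈ W, (hittingSet G W x).Finite) : μ W = 0 := by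
  have hnull (F : {F : Finset G // F.Nonempty}) : μ {x | hittingSet G W x = F.1} = 0 :=
    hG (measurableSet_setOf_hittingSet_eq hW _)
      (isWandering_setOf_hittingSet_eq (Finset.finite_toSet _) F.2)
  refine measure_mono_null (fun x hx ↦ ?_) (measure_iUnion_null hnull)
  have hne : (hfin x hx).toFinset.Nonempty :=
    (hfin x hx).toFinset_nonempty.2 ⟨0, zero_mem_hittingSet.2 hx⟩
  exact Set.mem_iUnion.2 ⟨⟨_, hne⟩, (hfin x hx).coe_toFinset.symm⟩

theorem IsWandering.finite_hittingSet {L : AddSubgroup G} [L.FiniteIndex] (hW : IsWandering L W)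
    (x : S) : (hittingSet G W x).Finite := by
  refine Set.Finite.of_injOn (Set.mapsTo_univ ((↑) : G → G ⧸ L) _) ?_ Set.finite_univ
  rintro a ⟨y, hy, rfl⟩ b ⟨z, hz, hzy⟩ hab
  have hyz : (-a + b) +ᵥ z = y := by rw [add_vadd, neg_vadd_eq_iff]; exact hzy
  have hL : (⟨-a + b, QuotientAddGroup.eq.1 hab⟩ : L) = 0 :=
    isWandering_iff_forall_mem.1 hW _ z hz (hyz.symm ▸ hy)
  exact neg_add_eq_zero.1 (congrArg Subtype.val hL)

theorem IsConservative.addSubgroup_of_finiteIndex [Countable G] [IsAddTorsionFree G]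
    [MeasurableSpace S] [MeasurableConstVAdd G S] {μ : Measure S} (hG : IsConservative G μ)
    (L : AddSubgroup G) [L.FiniteIndex] : IsConservative L μ :=
  fun _ hWm hW ↦ hG.measure_eq_zero_of_finite_hittingSet hWm fun x _ ↦ hW.finite_hittingSet x

end HittingSet

theorem isAddTorsionFree_addSubgroup_iff {G : Type*} [AddCommGroup G] {H : AddSubgroup G} :
    IsAddTorsionFree H ↔ ∀ h ∈ H, ∀ n : ℕ, 0 < n → n • h = 0 → h = 0 := by
  simp only [isAddTorsionFree_iff_not_isOfFinAddOrder, isOfFinAddOrder_iff_nsmul_eq_zero,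
    Subtype.forall, Subtype.ext_iff, AddSubgroup.coe_nsmul, AddSubgroup.coe_zero, ne_eq]
  exact ⟨fun h g hg n hn hng ↦ of_not_not fun hg₀ ↦ h g hg hg₀ ⟨n, hn, hng⟩,
    fun h g hg hg₀ ⟨n, hn, hng⟩ ↦ hg₀ (h g hg n hn hng)⟩

section Subgroups

variable {Γ S : Type*} [AddGroup Γ] [AddAction Γ S] [MeasurableSpace S] [MeasurableConstVAdd Γ S]
  {μ : Measure S} {H H' K : AddSubgroup Γ}

theorem IsConservative.of_finiteIndex_of_forall_exists_add [Countable H] [IsAddTorsionFree H]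
    (hH : IsConservative H μ) (hK : ∀ w ∈ K, ∀ x : S, w +ᵥ x = x) (hHK : H ⊓ K = ⊥)
    (L : AddSubgroup H) [L.FiniteIndex]
    (hL : ∀ l ∈ L, ∃ h' ∈ H', ∃ w ∈ K, (l : Γ) = h' + w) : IsConservative H' μ := by
  refine (hH.addSubgroup_of_finiteIndex L).of_forall_exists_vadd_eq fun l hl₀ ↦ ?_
  obtain ⟨h', hh', w, hw, hl⟩ := hL l l.2
  refine ⟨⟨h', hh'⟩, fun hh'₀ ↦ hl₀ ?_, fun x ↦ ?_⟩
  · obtain rfl : h' = 0 := congrArg Subtype.val hh'₀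
    rw [zero_add] at hl
    have hlHK : (l : Γ) ∈ H ⊓ K := ⟨(l : H).2, hl ▸ hw⟩
    rw [hHK, AddSubgroup.mem_bot] at hlHK
    exact Subtype.ext (Subtype.ext hlHK)
  · change (l : Γ) +ᵥ x = h' +ᵥ x
    rw [hl, add_vadd, hK w hw]

open scoped IsMulCommutative in
theorem conservative_of_conservative_subgroup_general [IsAddCommutative H] (hHfg : H.FG)
    (hHtf : IsAddTorsionFree H) (hK : ∀ w ∈ K, ∀ x : S, w +ᵥ x = x) (hHK : H ⊓ K = ⊥)
    (hHcons : IsConservative H μ) {r : ℕ} (hr : r ≠ 0)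
    (hrH : ∀ h ∈ H, ∃ h' ∈ H', ∃ w ∈ K, r • h = h' + w) : IsConservative H' μ := by
  have : AddGroup.FG H := (AddGroup.fg_iff_addSubgroup_fg H).2 hHfg
  have : Module.Finite ℤ H := Module.Finite.iff_addGroup_fg.2 this
  have : Countable H := Finsupp.Countable.of_moduleFinite (R := ℤ)
  have := AddSubgroup.finiteIndex_range_nsmulAddMonoidHom_of_fg H hr
  refine hHcons.of_finiteIndex_of_forall_exists_add hK hHK (nsmulAddMonoidHom r).range ?_
  rintro _ ⟨h, rfl⟩
  exact hrH h h.2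

end Subgroups

/-- The additive action given by a family of maps. -/
abbrev addActionOfFamily {Γ S : Type*} [AddMonoid Γ] (φ : Γ → S → S) (hid : φ 0 = id)
    (hadd : ∀ g h, φ (g + h) = φ g ∘ φ h) : AddAction Γ S where
  vadd := φ
  zero_vadd := congrFun hid
  add_vadd g h := congrFun (hadd g h)

/-- let `{φ_g}` be a nonsingular action of a countable abelian group `Γ` on a
σ-finite measure space, `K = {g : φ_g = id}`. If `H` is a finitely generated torsion-free
subgroup of `Γ` with `H ∩ K = {0}` whose action is conservative, `r ≥ 1`, and `H'` is a
subgroup with `r·H ⊆ H' + K`, then the action of `H'` is conservative. -/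
theorem conservative_of_conservative_subgroup
    (Γ : Type*) [AddCommGroup Γ] [Countable Γ]
    (S : Type*) [MeasurableSpace S] (μ : Measure S) [SigmaFinite μ]
    (φ : Γ → S → S)
    (hmeas : ∀ g, Measurable (φ g))
    (hid : φ 0 = id)
    (hadd : ∀ g h, φ (g + h) = φ g ∘ φ h)
    (hns : ∀ g, ∀ A : Set S, MeasurableSet A → (μ (φ g '' A) = 0 ↔ μ A = 0))
    (K : AddSubgroup Γ) (hK : ∀ g, g ∈ K ↔ φ g = id)
    (H : AddSubgroup Γ) (hHfg : H.FG)
    (hHtf : ∀ h ∈ H, ∀ n : ℕ, 0 < n → n • h = 0 → h = 0)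
    (hHK : H ⊓ K = ⊥)
    (hHcons : ¬ ∃ W : Set S, MeasurableSet W ∧ 0 < μ W ∧
        ∀ g ∈ H, ∀ h ∈ H, g ≠ h → Disjoint (φ g '' W) (φ h '' W))
    (r : ℕ) (hr : 1 ≤ r)
    (H' : AddSubgroup Γ)
    (hrH : ∀ h ∈ H, ∃ h' ∈ H', ∃ w ∈ K, r • h = h' + w) :
    ¬ ∃ W : Set S, MeasurableSet W ∧ 0 < μ W ∧
        ∀ g ∈ H', ∀ h ∈ H', g ≠ h → Disjoint (φ g '' W) (φ h '' W) := by
  let _ := addActionOfFamily φ hid hadd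
  have : MeasurableConstVAdd Γ S := ⟨hmeas⟩
  exact isConservative_addSubgroup_iff.1 <| conservative_of_conservative_subgroup_general hHfg
    (isAddTorsionFree_addSubgroup_iff.2 hHtf) (fun w hw ↦ congrFun ((hK w).1 hw)) hHK
    (isConservative_addSubgroup_iff.2 hHcons) (Nat.one_le_iff_ne_zero.1 hr) hrH
end

section
/- Suppose M' is a positive integer and x_1,…,x_l, u_1,…,u_p, v_1,…,v_q are elements of ℤ^d such that for every integer n ≥ M', [−n𝟏, n𝟏] ∩ ℤ^d ⊆ ⋃_{k=1}^{l} { x_k + Σ_{i=1}^p α_i u_i + Σ_{j=1}^q β_j v_j : α_i, β_j ∈ [−M'n, M'n] ∩ ℤ for all i, j }. Set M := max(M', ‖x_1‖_∞, …, ‖x_l‖_∞). Then for every integer n ≥ 1 and every integer m ≥ 0, [−n𝟏, n𝟏] ∩ Γ_m ⊆ { y + Σ_{i=1}^p α_i u_i + Σ_{j=1}^q β_j v_j : y ∈ [−M𝟏, M𝟏] ∩ Γ_m, α_i, β_j ∈ [−Mn, Mn] ∩ 2^{-m}ℤ for all i, j }; consequently [−n𝟏, n𝟏] ∩ Γ ⊆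 { y + Σ_{i=1}^p α_i u_i + Σ_{j=1}^q β_j v_j : y ∈ [−M𝟏, M𝟏] ∩ Γ, α_i, β_j ∈ [−Mn, Mn] ∩ ℚ_bin for all i, j }. -/
/-! Dividing by `N` carries the points of `ℤ^d` of norm at most `N * n` onto the points of
`N⁻¹ℤ^d` of norm at most `n`, and it commutes with the linear map sending coefficients to
combinations of the `u_i` and `v_j`. So the integer covering at radius `N * n` rescales to one of
the finer grid at radius `n`, where the centres only get shorter and the bound `M * (N * n)` on
the coefficients becomes `M * n`. If `N * n` is below the threshold `M` of the integer covering,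
then `n ≤ M` and every point can serve as its own centre. -/

open scoped Pointwise

section GridBox

variable {K ι σ τ : Type*} [Field K] [LinearOrder K]

/-- The box `[-r𝟏, r𝟏] ∩ c⁻¹ℤ^ι` of grid points. It holds the points to be covered and the centres,
and, with `ι` replaced by the index type of the spanning vectors, the admissible coefficients. -/
def gridBox (c r : K) : Set (ι → K) :=
  {t | ∀ j, |t j| ≤ r ∧ ∃ z : ℤ, t j = z / c}

lemma gridBox_mono {c r s : K} (hrs : r ≤ s) :
    (gridBox c r : Set (ι → K)) ⊆ gridBox c s :=
  fun _ ht j ↦ ⟨(ht j).1.trans hrs, (ht j).2⟩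

lemma sumElim_mem_gridBox {c r : K} {α : σ → K} {β : τ → K} :
    Sum.elim α β ∈ gridBox c r ↔ α ∈ gridBox c r ∧ β ∈ gridBox c r :=
  Sum.forall

variable [IsStrictOrderedRing K]

lemma zero_mem_gridBox {c r : K} (hr : 0 ≤ r) : (0 : ι → K) ∈ gridBox c r :=
  fun _ ↦ ⟨by simpa using hr, 0, by simp⟩

lemma mem_gridBox_one_natCast_iff {n : ℕ} {t : ι → K} :
    t ∈ gridBox 1 (n : K) ↔ ∃ z : ι → ℤ, (∀ j, |z j| ≤ n) ∧ t = fun j ↦ (z j : K) := by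
  constructor
  · intro ht
    choose ht z hz using ht
    simp only [div_one] at hz
    exact ⟨z, fun j ↦ by exact_mod_cast hz j ▸ ht j, funext hz⟩
  · rintro ⟨z, hz, rfl⟩ j
    exact ⟨(mod_cast hz j : |(z j : K)| ≤ n), z j, (div_one _).symm⟩

lemma inv_smul_gridBox_one {c : K} (hc : 0 < c) (r : K) :
    c⁻¹ • (gridBox 1 r : Set (ι → K)) = gridBox c (r / c) := by
  ext t
  rw [Set.mem_inv_smul_set_iff₀ hc.ne']
  refine forall_congr' fun j ↦ and_congr ?_ (exists_congr fun z ↦ ?_)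
  · rw [Pi.smul_apply, smul_eq_mul, abs_mul, abs_of_pos hc, le_div_iff₀' hc]
  · rw [Pi.smul_apply, smul_eq_mul, div_one, eq_div_iff hc.ne', mul_comm]

theorem gridBox_subset_add_image_of_one {M : ℕ} (L : (σ → K) →ₗ[K] (ι → K))
    (hL : ∀ n : ℕ, M ≤ n → gridBox 1 (n : K) ⊆ gridBox 1 (M : K) + L '' gridBox 1 (M * n : K))
    {N : ℕ} (hN : 0 < N) (n : ℕ) :
    gridBox (N : K) (n : K) ⊆ gridBox (N : K) (M : K) + L '' gridBox (N : K) (M * n : K) := by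
  have hN' : (0 : K) < N := Nat.cast_pos.2 hN
  obtain hlarge | hsmall := le_or_gt M (N * n)
  · calc gridBox (N : K) (n : K)
        = (N : K)⁻¹ • gridBox 1 ((N * n : ℕ) : K) := by
          rw [inv_smul_gridBox_one hN', Nat.cast_mul, mul_div_cancel_left₀ _ hN'.ne']
      _ ⊆ (N : K)⁻¹ • (gridBox 1 (M : K) + L '' gridBox 1 (M * (N * n : ℕ) : K)) :=
          Set.smul_set_mono (hL _ hlarge)
      _ = (N : K)⁻¹ • gridBox 1 (M : K) + L '' ((N : K)⁻¹ • gridBox 1 (M * (N * n : ℕ) : K)) := by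
          rw [smul_add, image_smul_set]
      _ = gridBox (N : K) (M / N : K) + L '' gridBox (N : K) (M * n : K) := by
          rw [inv_smul_gridBox_one hN', inv_smul_gridBox_one hN', Nat.cast_mul, mul_left_comm,
            mul_div_cancel_left₀ _ hN'.ne']
      _ ⊆ gridBox (N : K) (M : K) + L '' gridBox (N : K) (M * n : K) :=
          Set.add_subset_add_right
            (gridBox_mono (div_le_self M.cast_nonneg (Nat.one_le_cast.2 hN)))
  · have hnM : n ≤ M := (Nat.le_mul_of_pos_left n hN).trans hsmall.le
    intro t ht
    exact Set.mem_add.2 ⟨t, gridBox_mono (Nat.cast_le.2 hnM) ht, 0,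
      ⟨0, zero_mem_gridBox (by positivity), map_zero L⟩, add_zero t⟩

end GridBox

lemma linearCombination_sumElim_apply {R V σ τ : Type*} [Semiring R] [AddCommMonoid V]
    [Module R V] [Fintype σ] [Fintype τ] (a : σ → V) (b : τ → V) (α : σ → R) (β : τ → R) :
    Fintype.linearCombination R (Sum.elim a b) (Sum.elim α β) =
      ∑ i, α i • a i + ∑ j, β j • b j := by
  simp only [Fintype.linearCombination_apply, Fintype.sum_sum_type, Sum.elim_inl, Sum.elim_inr]

section IntegerCovering

variable {K ι κ σ τ : Type*} [Field K] [LinearOrder K] [IsStrictOrderedRing K]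
  [Fintype σ] [Fintype τ] {M' M : ℕ} {x : κ → ι → ℤ} {u : σ → ι → ℤ} {v : τ → ι → ℤ}

lemma gridBox_one_subset_of_integer_covering (hM : M' ≤ M) (hx : ∀ k j, |x k j| ≤ M)
    (hcov : ∀ n : ℕ, M' ≤ n → ∀ t : ι → ℤ, (∀ j, |t j| ≤ (n : ℤ)) →
      ∃ k : κ, ∃ α : σ → ℤ, ∃ β : τ → ℤ,
        (∀ i, |α i| ≤ (M' : ℤ) * n) ∧ (∀ j, |β j| ≤ (M' : ℤ) * n) ∧
        t = x k + ∑ i, α i • u i + ∑ j, β j • v j)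
    {n : ℕ} (hn : M ≤ n) :
    gridBox 1 (n : K) ⊆ gridBox 1 (M : K) +
      Fintype.linearCombination K (Sum.elim (fun i j ↦ (u i j : K)) fun i j ↦ (v i j : K)) ''
        gridBox 1 (M * n : K) := by
  intro t ht
  obtain ⟨z, hz, rfl⟩ := mem_gridBox_one_natCast_iff.1 ht
  obtain ⟨k, α, β, hα, hβ, rfl⟩ := hcov n (hM.trans hn) z hz
  have hMn : (M' : ℤ) * n ≤ (M * n : ℕ) := by exact_mod_cast Nat.mul_le_mul_right n hM
  refine Set.mem_add.2 ⟨fun j ↦ (x k j : K), mem_gridBox_one_natCast_iff.2 ⟨x k, hx k, rfl⟩, _,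
    ⟨Sum.elim (fun i ↦ (α i : K)) fun i ↦ (β i : K), ?_, rfl⟩, ?_⟩
  · rw [← Nat.cast_mul, sumElim_mem_gridBox]
    exact ⟨mem_gridBox_one_natCast_iff.2 ⟨α, fun i ↦ (hα i).trans hMn, rfl⟩,
      mem_gridBox_one_natCast_iff.2 ⟨β, fun i ↦ (hβ i).trans hMn, rfl⟩⟩
  · rw [linearCombination_sumElim_apply]
    ext j
    simp [add_assoc]

theorem grid_covering_lemma_general {b : ℕ} (hb : 0 < b)
    (hM : M' ≤ M) (hx : ∀ k j, |x k j| ≤ M)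
    (hcov : ∀ n : ℕ, M' ≤ n → ∀ t : ι → ℤ, (∀ j, |t j| ≤ (n : ℤ)) →
      ∃ k : κ, ∃ α : σ → ℤ, ∃ β : τ → ℤ,
        (∀ i, |α i| ≤ (M' : ℤ) * n) ∧ (∀ j, |β j| ≤ (M' : ℤ) * n) ∧
        t = x k + ∑ i, α i • u i + ∑ j, β j • v j) :
    (∀ n m : ℕ, ∀ t : ι → K,
      (∀ j, |t j| ≤ (n : K)) → (∀ j, ∃ z : ℤ, t j = (z : K) / b ^ m) →
      ∃ y : ι → K, ∃ α : σ → K, ∃ β : τ → K,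
        (∀ j, |y j| ≤ (M : K) ∧ ∃ z : ℤ, y j = (z : K) / b ^ m) ∧
        (∀ i, |α i| ≤ (M : K) * n ∧ ∃ z : ℤ, α i = (z : K) / b ^ m) ∧
        (∀ j, |β j| ≤ (M : K) * n ∧ ∃ z : ℤ, β j = (z : K) / b ^ m) ∧
        t = y + ∑ i, α i • (fun j' ↦ (u i j' : K)) + ∑ j, β j • (fun j' ↦ (v j j' : K))) ∧
    (∀ n : ℕ, ∀ t : ι → K,
      (∀ j, |t j| ≤ (n : K)) → (∃ m : ℕ, ∀ j, ∃ z : ℤ, t j = (z : K) / b ^ m) →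
      ∃ y : ι → K, ∃ α : σ → K, ∃ β : τ → K,
        (∀ j, |y j| ≤ (M : K)) ∧ (∃ m : ℕ, ∀ j, ∃ z : ℤ, y j = (z : K) / b ^ m) ∧
        (∀ i, |α i| ≤ (M : K) * n ∧ ∃ m : ℕ, ∃ z : ℤ, α i = (z : K) / b ^ m) ∧
        (∀ j, |β j| ≤ (M : K) * n ∧ ∃ m : ℕ, ∃ z : ℤ, β j = (z : K) / b ^ m) ∧
        t = y + ∑ i, α i • (fun j' ↦ (u i j' : K)) + ∑ j, β j • (fun j' ↦ (v j j' : K))) := by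
  refine (and_iff_left_of_imp fun cover n t ht ⟨m, hm⟩ ↦ ?_).2 fun n m t ht hm ↦ ?_
  · have cover := gridBox_subset_add_image_of_one _
      (fun _ ↦ gridBox_one_subset_of_integer_covering (K := K) hM hx hcov) (pow_pos hb m) n
    rw [Nat.cast_pow] at cover
    obtain ⟨y, hy, _, ⟨γ, hγ, rfl⟩, rfl⟩ := Set.mem_add.1 (cover fun j ↦ ⟨ht j, hm j⟩)
    obtain ⟨α, β, rfl⟩ : ∃ α β, γ = Sum.elim α β := ⟨_, _, (Sum.elim_comp_inl_inr γ).symm⟩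
    obtain ⟨hα, hβ⟩ := sumElim_mem_gridBox.1 hγ
    exact ⟨y, α, β, hy, hα, hβ, by rw [linearCombination_sumElim_apply, add_assoc]⟩
  · obtain ⟨y, α, β, hy, hα, hβ, h_eq⟩ := cover n m t ht hm
    exact ⟨y, α, β, fun j ↦ (hy j).1, ⟨m, fun j ↦ (hy j).2⟩,
      fun i ↦ ⟨(hα i).1, m, (hα i).2⟩, fun j ↦ ⟨(hβ j).1, m, (hβ j).2⟩, h_eq⟩

end IntegerCovering

lemma abs_le_sup_sup_natAbs {κ ι : Type*} [Fintype κ] [Fintype ι] (x : κ → ι → ℤ) (k : κ) (j : ι) :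
    |x k j| ≤ (Finset.univ.sup fun k ↦ Finset.univ.sup fun j ↦ (x k j).natAbs : ℕ) := by
  rw [Int.abs_eq_natAbs, Nat.cast_le]
  exact (Finset.le_sup (f := fun j ↦ (x k j).natAbs) (Finset.mem_univ j)).trans
    (Finset.le_sup (f := fun k ↦ Finset.univ.sup fun j ↦ (x k j).natAbs) (Finset.mem_univ k))

/-- from the integer covering property of `[−n𝟏,n𝟏] ∩ ℤ^d` by translates
`x_k + Σ α_i u_i + Σ β_j v_j` with `|α_i|, |β_j| ≤ M'n`, one deduces, with
`M := max(M', ‖x_1‖_∞, …, ‖x_l‖_∞)`, the analogous covering of `[−n𝟏,n𝟏] ∩ Γ_m` for every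
`m ≥ 0` (with coefficients in `[−Mn, Mn] ∩ 2^{-m}ℤ` and `y ∈ [−M𝟏,M𝟏] ∩ Γ_m`), and
consequently of `[−n𝟏,n𝟏] ∩ Γ` (with coefficients binary rationals in `[−Mn, Mn]` and
`y ∈ [−M𝟏,M𝟏] ∩ Γ`). -/
theorem grid_covering_lemma
    (d l p q : ℕ) (M' : ℕ) (hM' : 1 ≤ M')
    (x : Fin l → Fin d → ℤ) (u : Fin p → Fin d → ℤ) (v : Fin q → Fin d → ℤ)
    (hcov : ∀ n : ℕ, M' ≤ n → ∀ t : Fin d → ℤ, (∀ j, |t j| ≤ (n : ℤ)) →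
      ∃ k : Fin l, ∃ α : Fin p → ℤ, ∃ β : Fin q → ℤ,
        (∀ i, |α i| ≤ (M' : ℤ) * n) ∧ (∀ j, |β j| ≤ (M' : ℤ) * n) ∧
        t = x k + ∑ i, α i • u i + ∑ j, β j • v j)
    (M : ℕ)
    (hM : M = max M' (Finset.univ.sup fun k : Fin l =>
      Finset.univ.sup fun j : Fin d => (x k j).natAbs)) :
    (∀ n : ℕ, 1 ≤ n → ∀ m : ℕ, ∀ t : Fin d → ℝ,
      (∀ j, |t j| ≤ (n : ℝ)) → (∀ j, ∃ z : ℤ, t j = (z : ℝ) / 2 ^ m) →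
      ∃ y : Fin d → ℝ, ∃ α : Fin p → ℝ, ∃ β : Fin q → ℝ,
        (∀ j, |y j| ≤ (M : ℝ) ∧ ∃ z : ℤ, y j = (z : ℝ) / 2 ^ m) ∧
        (∀ i, |α i| ≤ (M : ℝ) * n ∧ ∃ z : ℤ, α i = (z : ℝ) / 2 ^ m) ∧
        (∀ j, |β j| ≤ (M : ℝ) * n ∧ ∃ z : ℤ, β j = (z : ℝ) / 2 ^ m) ∧
        t = y + ∑ i, α i • (fun j' => ((u i j' : ℝ))) +
              ∑ j, β j • (fun j' => ((v j j' : ℝ)))) ∧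
    (∀ n : ℕ, 1 ≤ n → ∀ t : Fin d → ℝ,
      (∀ j, |t j| ≤ (n : ℝ)) → (∃ m : ℕ, ∀ j, ∃ z : ℤ, t j = (z : ℝ) / 2 ^ m) →
      ∃ y : Fin d → ℝ, ∃ α : Fin p → ℝ, ∃ β : Fin q → ℝ,
        (∀ j, |y j| ≤ (M : ℝ)) ∧ (∃ m : ℕ, ∀ j, ∃ z : ℤ, y j = (z : ℝ) / 2 ^ m) ∧
        (∀ i, |α i| ≤ (M : ℝ) * n ∧ ∃ m : ℕ, ∃ z : ℤ, α i = (z : ℝ) / 2 ^ m) ∧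
        (∀ j, |β j| ≤ (M : ℝ) * n ∧ ∃ m : ℕ, ∃ z : ℤ, β j = (z : ℝ) / 2 ^ m) ∧
        t = y + ∑ i, α i • (fun j' => ((u i j' : ℝ))) +
              ∑ j, β j • (fun j' => ((v j j' : ℝ)))) := by
  have hx k j : |x k j| ≤ M :=
    (abs_le_sup_sup_natAbs x k j).trans (Nat.cast_le.2 (hM ▸ le_max_right _ _))
  have := grid_covering_lemma_general (K := ℝ) two_pos (hM ▸ le_max_left _ _) hx hcov
  exact ⟨fun n _ ↦ mod_cast this.1 n, fun n _ ↦ mod_cast this.2 n⟩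
end
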